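/- Under the feature and core-state assumptions, the optimal value V† of the linear program CoreLP satisfies |V† − v*(s₀)| ≤ 10γ·ε_approx/(1−γ). -/

import Mathlib

open scoped BigOperators

namespace MDPPlan

variable {S A : Type} [Fintype S] [Fintype A] [DecidableEq S] {d m : ℕ}

/-- `φ_sᵀθ`: dot product of the feature vector of state `s` with weights `θ`. -/
noncomputable def phiDot (Φ : S → Fin d → ℝ) (θ : Fin d → ℝ) (s : S) : ℝ :=
  ∑ j, Φ s j * θ j

/-- The sequence `𝒮₊ = (s₀, s₁, …, s_m)`: `none` is the planning state `s₀`,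
`some i` is the `i`-th core state. -/
def splus (s₀ : S) (c : Fin m → S) : Option (Fin m) → S := fun o => o.elim s₀ c

/-- State-transition matrix `P_π` of a stationary policy `π`. -/
noncomputable def Ppi (P : S → A → S → ℝ) (π : S → A → ℝ) : Matrix S S ℝ :=
  Matrix.of fun s s' => ∑ a, π s a * P s a s'

/-- Expected reward `r_π` of a stationary policy `π`. -/
noncomputable def rpi (r : S → A → ℝ) (π : S → A → ℝ) : S → ℝ :=
  fun s => ∑ a, π s a * r s a

/-- `π` is a stationary policy: each `π(·|s)` is a probability distribution over actions. -/
def IsPolicy (π : S → A → ℝ) : Prop := (∀ s a, 0 ≤ π s a) ∧ ∀ s, ∑ a, π s a = 1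

/-- Value function `v_π = Σ_{t≥0} (γ P_π)^t r_π`. -/
noncomputable def vpi (γ : ℝ) (P : S → A → S → ℝ) (r : S → A → ℝ) (π : S → A → ℝ) :
    S → ℝ :=
  ∑' t : ℕ, ((γ • Ppi P π) ^ t).mulVec (rpi r π)

/-- Optimal value function `v*(s) = sup_π v_π(s)`. -/
noncomputable def vstar (γ : ℝ) (P : S → A → S → ℝ) (r : S → A → ℝ) : S → ℝ :=
  fun s => ⨆ π : {π : S → A → ℝ // IsPolicy π}, vpi γ P r π.1 s

/-- Optimal action-value function `q*(s,a) = r_{sa} + γ P_{sa} v*`. -/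
noncomputable def qstar (γ : ℝ) (P : S → A → S → ℝ) (r : S → A → ℝ) (s : S) (a : A) : ℝ :=
  r s a + γ * ∑ s', P s a s' * vstar γ P r s'

/-- `ε_approx = inf_θ max_s |v*(s) − φ_sᵀθ|`. -/
noncomputable def epsApprox (Φ : S → Fin d → ℝ) (v : S → ℝ) : ℝ :=
  ⨅ θ : Fin d → ℝ, ⨆ s : S, |v s - phiDot Φ θ s|

/-- Membership in `Λ`: nonnegative and the `s₀`-block sums to one. -/
def InLambda (lam : Option (Fin m) × A → ℝ) : Prop :=
  (∀ p, 0 ≤ lam p) ∧ ∑ a, lam (none, a) = 1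

/-- The CoreLP equality constraint `φ_{s₀}ᵀ + λᵀW(γP − E)Φ = 0ᵀ`. -/
def CoreLPConstraint (γ : ℝ) (P : S → A → S → ℝ) (Φ : S → Fin d → ℝ) (s₀ : S)
    (c : Fin m → S) (lam : Option (Fin m) × A → ℝ) : Prop :=
  ∀ j : Fin d, Φ s₀ j + ∑ p : Option (Fin m) × A,
    lam p * (γ * (∑ s', P (splus s₀ c p.1) p.2 s' * Φ s' j) - Φ (splus s₀ c p.1) j) = 0

/-- The CoreLP objective `λᵀWr`. -/
noncomputable def CoreLPObj (r : S → A → ℝ) (s₀ : S) (c : Fin m → S)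
    (lam : Option (Fin m) × A → ℝ) : ℝ :=
  ∑ p : Option (Fin m) × A, lam p * r (splus s₀ c p.1) p.2

/-- The optimal value `V†` of CoreLP. -/
noncomputable def Vdagger (γ : ℝ) (P : S → A → S → ℝ) (r : S → A → ℝ)
    (Φ : S → Fin d → ℝ) (s₀ : S) (c : Fin m → S) : ℝ :=
  sSup {x : ℝ | ∃ lam : Option (Fin m) × A → ℝ,
    InLambda lam ∧ CoreLPConstraint γ P Φ s₀ c lam ∧ x = CoreLPObj r s₀ c lam}

/-- Feasibility for LRALP: `W*r + W*(γP − E)Φθ ≤ 0`. -/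
def LRALPFeasible (γ : ℝ) (P : S → A → S → ℝ) (r : S → A → ℝ) (Φ : S → Fin d → ℝ)
    (c : Fin m → S) (θ : Fin d → ℝ) : Prop :=
  ∀ (i : Fin m) (a : A),
    r (c i) a + (γ * (∑ s', P (c i) a s' * phiDot Φ θ s') - phiDot Φ θ (c i)) ≤ 0

/-- `V_LRALP(μ) = min { μᵀΦθ : θ feasible for LRALP }`. -/
noncomputable def VLRALP (γ : ℝ) (P : S → A → S → ℝ) (r : S → A → ℝ) (Φ : S → Fin d → ℝ)
    (c : Fin m → S) (μ : S → ℝ) : ℝ :=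
  sInf {x : ℝ | ∃ θ : Fin d → ℝ, LRALPFeasible γ P r Φ c θ ∧ x = ∑ s, μ s * phiDot Φ θ s}

/-- The Saddle CoreLP objective `f(λ,θ) = λᵀWr + φ_{s₀}ᵀθ + λᵀW(γP − E)Φθ`. -/
noncomputable def fObj (γ : ℝ) (P : S → A → S → ℝ) (r : S → A → ℝ) (Φ : S → Fin d → ℝ)
    (s₀ : S) (c : Fin m → S) (lam : Option (Fin m) × A → ℝ) (θ : Fin d → ℝ) : ℝ :=
  CoreLPObj r s₀ c lam + phiDot Φ θ s₀ +
    ∑ p : Option (Fin m) × A,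
      lam p * (γ * (∑ s', P (splus s₀ c p.1) p.2 s' * phiDot Φ θ s') -
        phiDot Φ θ (splus s₀ c p.1))

/-- The Saddle LRALP objective `g_μ(λ*,θ) = λ*ᵀW*r + μᵀΦθ + λ*ᵀW*(γP − E)Φθ`. -/
noncomputable def gObj (γ : ℝ) (P : S → A → S → ℝ) (r : S → A → ℝ) (Φ : S → Fin d → ℝ)
    (c : Fin m → S) (μ : S → ℝ) (lamS : Fin m × A → ℝ) (θ : Fin d → ℝ) : ℝ :=
  (∑ p : Fin m × A, lamS p * r (c p.1) p.2) + (∑ s, μ s * phiDot Φ θ s) +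
    ∑ p : Fin m × A,
      lamS p * (γ * (∑ s', P (c p.1) p.2 s' * phiDot Φ θ s') - phiDot Φ θ (c p.1))

/-- The `𝓑`-bounded duality gap `δ_𝓑(λ̂,θ̂) = max_{λ∈Λ_γ} f(λ,θ̂) − inf_{θ∈𝓑} f(λ̂,θ)`. -/
noncomputable def dualityGap (γ : ℝ) (P : S → A → S → ℝ) (r : S → A → ℝ)
    (Φ : S → Fin d → ℝ) (s₀ : S) (c : Fin m → S) (Bset : Set (Fin d → ℝ))
    (lamHat : Option (Fin m) × A → ℝ) (θHat : Fin d → ℝ) : ℝ :=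
  sSup {x : ℝ | ∃ lam : Option (Fin m) × A → ℝ,
      InLambda lam ∧ (∑ p, |lam p|) = 1 / (1 - γ) ∧ x = fObj γ P r Φ s₀ c lam θHat} -
    sInf {x : ℝ | ∃ θ ∈ Bset, x = fObj γ P r Φ s₀ c lamHat θ}

/-!
Feasibility of `λ` says that the linear functional `v ↦ λᵀW(E − γP)v` agrees with evaluation at
`s₀` on the span of the features. Since the constant `1` lies in this span, the core block of `λ`
has total mass `γ / (1 - γ)`, so at `v*` the functional differs from `v* s₀` by at most a multiple
of the distance from `v*` to the span. By the Bellman inequality, the objective `λᵀWr` is at most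
the value of the functional at `v*`, with equality when `λ` plays an optimal policy. A feasible `λ`
of the latter kind exists: moving the mass of each successor state to the core states by `Z`
preserves the features and turns the policy into a Markov chain on the core states, whose discounted
occupancy is `λ`.
-/

open Matrix

section StochasticVectors

variable {ι κ : Type*} [Fintype ι] [Fintype κ]

theorem abs_dotProduct_le_sum_mul {w e : ι → ℝ} {ε : ℝ} (hw : 0 ≤ w) (he : ∀ i, |e i| ≤ ε) :
    |w ⬝ᵥ e| ≤ (∑ i, w i) * ε := by
  rw [Finset.sum_mul]
  refine (Finset.abs_sum_le_sum_abs _ _).trans (Finset.sum_le_sum fun i _ => ?_)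
  rw [abs_mul, abs_of_nonneg (hw i)]
  exact mul_le_mul_of_nonneg_left (he i) (hw i)

theorem abs_dotProduct_le_of_mem_stdSimplex {w e : ι → ℝ} {ε : ℝ} (hw : w ∈ stdSimplex ℝ ι)
    (he : ∀ i, |e i| ≤ ε) : |w ⬝ᵥ e| ≤ ε := by
  simpa only [hw.2, one_mul] using abs_dotProduct_le_sum_mul hw.1 he

theorem dotProduct_le_of_mem_stdSimplex {w e : ι → ℝ} {b : ℝ} (hw : w ∈ stdSimplex ℝ ι)
    (he : ∀ i, e i ≤ b) : w ⬝ᵥ e ≤ b :=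
  calc w ⬝ᵥ e ≤ ∑ i, w i * b :=
        Finset.sum_le_sum fun i _ => mul_le_mul_of_nonneg_left (he i) (hw.1 i)
    _ = b := by rw [← Finset.sum_mul, hw.2, one_mul]

theorem vecMul_mem_stdSimplex {p : κ → ℝ} {M : Matrix κ ι ℝ} (hp : p ∈ stdSimplex ℝ κ)
    (hM : ∀ k, M k ∈ stdSimplex ℝ ι) : p ᵥ* M ∈ stdSimplex ℝ ι := by
  rw [vecMul_eq_sum]
  exact (convex_stdSimplex ℝ ι).sum_mem (fun k _ => hp.1 k) hp.2 fun k _ => hM k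

end StochasticVectors

section OccupancyMatrix

attribute [local instance] Matrix.linftyOpNormedRing Matrix.linftyOpNormedAlgebra

variable {n : Type*} [Fintype n] [DecidableEq n] {γ : ℝ} {Q : Matrix n n ℝ}

theorem mem_rowStochastic_of_forall_mem_stdSimplex (hQ : ∀ i, Q i ∈ stdSimplex ℝ n) :
    Q ∈ rowStochastic ℝ n :=
  mem_rowStochastic_iff_sum.2 ⟨fun i => (hQ i).1, fun i => (hQ i).2⟩

theorem linfty_opNorm_le_one_of_mem_rowStochastic (hQ : Q ∈ rowStochastic ℝ n) : ‖Q‖ ≤ 1 := by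
  have hrow : ∀ i, ∑ j, ‖Q i j‖₊ ≤ 1 := fun i => by
    rw [← NNReal.coe_le_coe, NNReal.coe_sum, NNReal.coe_one, ← sum_row_of_mem_rowStochastic hQ i]
    exact Finset.sum_le_sum fun j _ => (Real.norm_of_nonneg (nonneg_of_mem_rowStochastic hQ)).le
  rw [linfty_opNorm_def]
  exact_mod_cast Finset.sup_le fun i _ => hrow i

theorem norm_smul_lt_one_of_mem_rowStochastic (hγ0 : 0 ≤ γ) (hγ1 : γ < 1)
    (hQ : Q ∈ rowStochastic ℝ n) : ‖γ • Q‖ < 1 :=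
  calc ‖γ • Q‖ = γ * ‖Q‖ := by rw [norm_smul, Real.norm_of_nonneg hγ0]
    _ ≤ γ := mul_le_of_le_one_right hγ0 (linfty_opNorm_le_one_of_mem_rowStochastic hQ)
    _ < 1 := hγ1

/-- The expected discounted visit counts `∑ₜ (γQ)ᵗ` of a Markov chain with transition matrix `Q`:
entry `(i, j)` counts the visits to `j` when starting from `i`. -/
noncomputable def occupancyMatrix (γ : ℝ) (Q : Matrix n n ℝ) : Matrix n n ℝ :=
  ∑' t : ℕ, (γ • Q) ^ t

theorem hasSum_occupancyMatrix (hγ0 : 0 ≤ γ) (hγ1 : γ < 1) (hQ : Q ∈ rowStochastic ℝ n) :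
    HasSum (fun t : ℕ => (γ • Q) ^ t) (occupancyMatrix γ Q) :=
  (summable_geometric_of_norm_lt_one (norm_smul_lt_one_of_mem_rowStochastic hγ0 hγ1 hQ)).hasSum

theorem occupancyMatrix_mul_one_sub (hγ0 : 0 ≤ γ) (hγ1 : γ < 1) (hQ : Q ∈ rowStochastic ℝ n) :
    occupancyMatrix γ Q * (1 - γ • Q) = 1 :=
  geom_series_mul_neg _ (norm_smul_lt_one_of_mem_rowStochastic hγ0 hγ1 hQ)

theorem occupancyMatrix_nonneg (hγ0 : 0 ≤ γ) (hγ1 : γ < 1) (hQ : Q ∈ rowStochastic ℝ n)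
    (i j : n) : 0 ≤ occupancyMatrix γ Q i j := by
  have hsum := Pi.hasSum.1 (Pi.hasSum.1 (hasSum_occupancyMatrix hγ0 hγ1 hQ) i) j
  refine hsum.nonneg fun t => ?_
  rw [smul_pow]
  exact mul_nonneg (pow_nonneg hγ0 t) (nonneg_of_mem_rowStochastic (pow_mem hQ t))

theorem occupancyMatrix_mulVec_sub (hγ0 : 0 ≤ γ) (hγ1 : γ < 1) (hQ : Q ∈ rowStochastic ℝ n)
    (u : n → ℝ) : occupancyMatrix γ Q *ᵥ (u - γ • Q *ᵥ u) = u := by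
  rw [← smul_mulVec, ← one_mulVec u, mulVec_mulVec, mul_one, ← sub_mulVec, mulVec_mulVec,
    occupancyMatrix_mul_one_sub hγ0 hγ1 hQ]

theorem exists_nonneg_eq_add_smul_vecMul (hγ0 : 0 ≤ γ) (hγ1 : γ < 1)
    (hQ : Q ∈ rowStochastic ℝ n) {b : n → ℝ} (hb : 0 ≤ b) :
    ∃ x, 0 ≤ x ∧ x = b + γ • (x ᵥ* Q) := by
  refine ⟨b ᵥ* occupancyMatrix γ Q, fun j => ?_, ?_⟩
  · exact dotProduct_nonneg_of_nonneg hb fun i => occupancyMatrix_nonneg hγ0 hγ1 hQ i j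
  · rw [← sub_eq_iff_eq_add, ← vecMul_smul, vecMul_vecMul, ← vecMul_sub]
    nth_rw 1 [← mul_one (occupancyMatrix γ Q)]
    rw [← mul_sub, occupancyMatrix_mul_one_sub hγ0 hγ1 hQ, vecMul_one]

end OccupancyMatrix

section BellmanOperator

variable {S A : Type*} [Fintype S] {γ : ℝ} {P : S → A → S → ℝ} {r : S → A → ℝ}

/-- The one-step lookahead `r_{sa} + γ P_{sa} u`: the value of playing `a` in `s` when the next
state is valued by `u`. -/
def lookahead (γ : ℝ) (P : S → A → S → ℝ) (r : S → A → ℝ) (u : S → ℝ) (s : S) (a : A) : ℝ :=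
  r s a + γ * (P s a ⬝ᵥ u)

/-- The Bellman optimality operator. -/
noncomputable def bellmanOp (γ : ℝ) (P : S → A → S → ℝ) (r : S → A → ℝ) (u : S → ℝ) (s : S) : ℝ :=
  ⨆ a, lookahead γ P r u s a

theorem lookahead_le_add_mul_dist (hγ0 : 0 ≤ γ) (hP : ∀ s a, P s a ∈ stdSimplex ℝ S)
    (u w : S → ℝ) (s : S) (a : A) :
    lookahead γ P r u s a ≤ lookahead γ P r w s a + γ * dist u w := by
  have hdiff : P s a ⬝ᵥ (u - w) ≤ dist u w :=
    dotProduct_le_of_mem_stdSimplex (hP s a) fun s' =>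
      (le_abs_self _).trans (dist_le_pi_dist u w s')
  rw [dotProduct_sub] at hdiff
  have := mul_le_mul_of_nonneg_left hdiff hγ0
  unfold lookahead
  linarith

variable [Finite A]

theorem lookahead_le_bellmanOp (u : S → ℝ) (s : S) (a : A) :
    lookahead γ P r u s a ≤ bellmanOp γ P r u s :=
  le_ciSup (Set.finite_range _).bddAbove a

variable [Nonempty A]

theorem exists_lookahead_eq_bellmanOp (u : S → ℝ) (s : S) :
    ∃ a, lookahead γ P r u s a = bellmanOp γ P r u s :=
  exists_eq_ciSup_of_finite

theorem bellmanOp_le_add_mul_dist (hγ0 : 0 ≤ γ) (hP : ∀ s a, P s a ∈ stdSimplex ℝ S)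
    (u w : S → ℝ) (s : S) : bellmanOp γ P r u s ≤ bellmanOp γ P r w s + γ * dist u w :=
  ciSup_le fun a => (lookahead_le_add_mul_dist hγ0 hP u w s a).trans <| by
    gcongr
    exact lookahead_le_bellmanOp w s a

theorem contractingWith_bellmanOp (hγ0 : 0 ≤ γ) (hγ1 : γ < 1)
    (hP : ∀ s a, P s a ∈ stdSimplex ℝ S) :
    ContractingWith ⟨γ, hγ0⟩ (bellmanOp γ P r) := by
  refine ⟨hγ1, LipschitzWith.of_dist_le_mul fun u w => ?_⟩
  refine (dist_pi_le_iff (mul_nonneg hγ0 dist_nonneg)).2 fun s => abs_sub_le_iff.2 ⟨?_, ?_⟩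
  · exact sub_le_iff_le_add'.2 (bellmanOp_le_add_mul_dist hγ0 hP u w s)
  · rw [dist_comm]
    exact sub_le_iff_le_add'.2 (bellmanOp_le_add_mul_dist hγ0 hP w u s)

end BellmanOperator

section PolicyEvaluation

variable {S A : Type} [Fintype S] [Fintype A] {γ : ℝ} {P : S → A → S → ℝ} {r π : S → A → ℝ}
  {u : S → ℝ}

theorem rpi_add_smul_Ppi_mulVec (s : S) :
    rpi r π s + (γ • Ppi P π *ᵥ u) s = π s ⬝ᵥ lookahead γ P r u s := by
  have hassoc : (Ppi P π *ᵥ u) s = π s ⬝ᵥ fun a => P s a ⬝ᵥ u :=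
    (dotProduct_mulVec (π s) (P s) u).symm
  have hadd : lookahead γ P r u s = r s + γ • fun a => P s a ⬝ᵥ u := rfl
  rw [Pi.smul_apply, hassoc, hadd, dotProduct_add, dotProduct_smul]
  rfl

variable [DecidableEq S]

theorem Ppi_mem_rowStochastic (hP : ∀ s a, P s a ∈ stdSimplex ℝ S) (hπ : IsPolicy π) :
    Ppi P π ∈ rowStochastic ℝ S :=
  mem_rowStochastic_of_forall_mem_stdSimplex fun s =>
    vecMul_mem_stdSimplex (M := P s) ⟨hπ.1 s, hπ.2 s⟩ (hP s)

theorem vpi_eq_occupancyMatrix_mulVec (hγ0 : 0 ≤ γ) (hγ1 : γ < 1)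
    (hP : ∀ s a, P s a ∈ stdSimplex ℝ S) (hπ : IsPolicy π) :
    vpi γ P r π = occupancyMatrix γ (Ppi P π) *ᵥ rpi r π := by
  have hcont : Continuous fun M : Matrix S S ℝ => M *ᵥ rpi r π := by fun_prop
  exact ((hasSum_occupancyMatrix hγ0 hγ1 (Ppi_mem_rowStochastic hP hπ)).map
    (mulVec.addMonoidHomLeft (rpi r π)) hcont).tsum_eq

theorem vpi_le_of_lookahead_le (hγ0 : 0 ≤ γ) (hγ1 : γ < 1) (hP : ∀ s a, P s a ∈ stdSimplex ℝ S)
    (hπ : IsPolicy π) (hu : ∀ s a, lookahead γ P r u s a ≤ u s) : vpi γ P r π ≤ u := by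
  have hQ := Ppi_mem_rowStochastic hP hπ
  have hr : rpi r π ≤ u - γ • Ppi P π *ᵥ u := fun s => by
    rw [Pi.sub_apply, le_sub_iff_add_le, rpi_add_smul_Ppi_mulVec]
    exact dotProduct_le_of_mem_stdSimplex ⟨hπ.1 s, hπ.2 s⟩ (hu s)
  rw [vpi_eq_occupancyMatrix_mulVec hγ0 hγ1 hP hπ]
  refine le_of_le_of_eq (fun s => ?_) (occupancyMatrix_mulVec_sub hγ0 hγ1 hQ u)
  exact dotProduct_le_dotProduct_of_nonneg_left hr (occupancyMatrix_nonneg hγ0 hγ1 hQ s)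

theorem vpi_eq_of_dotProduct_lookahead_eq (hγ0 : 0 ≤ γ) (hγ1 : γ < 1)
    (hP : ∀ s a, P s a ∈ stdSimplex ℝ S) (hπ : IsPolicy π)
    (hu : ∀ s, π s ⬝ᵥ lookahead γ P r u s = u s) : vpi γ P r π = u := by
  have hr : rpi r π = u - γ • Ppi P π *ᵥ u := funext fun s => by
    rw [Pi.sub_apply, eq_sub_iff_add_eq, rpi_add_smul_Ppi_mulVec, hu]
  rw [vpi_eq_occupancyMatrix_mulVec hγ0 hγ1 hP hπ, hr,
    occupancyMatrix_mulVec_sub hγ0 hγ1 (Ppi_mem_rowStochastic hP hπ)]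

theorem exists_isPolicy_vpi_eq_of_isFixedPt [Nonempty A] (hγ0 : 0 ≤ γ) (hγ1 : γ < 1)
    (hP : ∀ s a, P s a ∈ stdSimplex ℝ S) (hu : Function.IsFixedPt (bellmanOp γ P r) u) :
    ∃ π, IsPolicy π ∧ vpi γ P r π = u := by
  classical
  choose g hg using exists_lookahead_eq_bellmanOp (γ := γ) (P := P) (r := r) u
  have hπ : IsPolicy fun s => (Pi.single (g s) 1 : A → ℝ) :=
    ⟨fun s => (single_mem_stdSimplex ℝ (g s)).1, fun s => (single_mem_stdSimplex ℝ (g s)).2⟩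
  refine ⟨_, hπ, vpi_eq_of_dotProduct_lookahead_eq hγ0 hγ1 hP hπ fun s => ?_⟩
  rw [single_one_dotProduct, hg s, hu]

theorem vstar_eq_of_isFixedPt [Nonempty A] (hγ0 : 0 ≤ γ) (hγ1 : γ < 1)
    (hP : ∀ s a, P s a ∈ stdSimplex ℝ S) (hu : Function.IsFixedPt (bellmanOp γ P r) u) :
    vstar γ P r = u := by
  obtain ⟨π, hπ, hπu⟩ := exists_isPolicy_vpi_eq_of_isFixedPt hγ0 hγ1 hP hu
  have hle : ∀ π : {π : S → A → ℝ // IsPolicy π}, vpi γ P r π.1 ≤ u := fun π =>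
    vpi_le_of_lookahead_le hγ0 hγ1 hP π.2 fun s a =>
      (lookahead_le_bellmanOp u s a).trans_eq (congrFun hu s)
  have : Nonempty {π : S → A → ℝ // IsPolicy π} := ⟨⟨π, hπ⟩⟩
  funext s
  refine le_antisymm (ciSup_le fun π => hle π s) ?_
  rw [← hπu]
  exact le_ciSup (f := fun π : {π : S → A → ℝ // IsPolicy π} => vpi γ P r π.1 s)
    ⟨u s, Set.forall_mem_range.2 fun π => hle π s⟩ ⟨π, hπ⟩

theorem isFixedPt_bellmanOp_vstar [Nonempty A] (hγ0 : 0 ≤ γ) (hγ1 : γ < 1)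
    (hP : ∀ s a, P s a ∈ stdSimplex ℝ S) :
    Function.IsFixedPt (bellmanOp γ P r) (vstar γ P r) := by
  have hfix := (contractingWith_bellmanOp (r := r) hγ0 hγ1 hP).fixedPoint_isFixedPt
  rwa [vstar_eq_of_isFixedPt hγ0 hγ1 hP hfix]

theorem qstar_le_vstar [Nonempty A] (hγ0 : 0 ≤ γ) (hγ1 : γ < 1)
    (hP : ∀ s a, P s a ∈ stdSimplex ℝ S) (s : S) (a : A) : qstar γ P r s a ≤ vstar γ P r s :=
  (lookahead_le_bellmanOp _ s a).trans_eq (congrFun (isFixedPt_bellmanOp_vstar hγ0 hγ1 hP) s)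

theorem exists_qstar_eq_vstar [Nonempty A] (hγ0 : 0 ≤ γ) (hγ1 : γ < 1)
    (hP : ∀ s a, P s a ∈ stdSimplex ℝ S) (s : S) : ∃ a, qstar γ P r s a = vstar γ P r s :=
  (exists_lookahead_eq_bellmanOp _ s).imp fun _ ha =>
    ha.trans (congrFun (isFixedPt_bellmanOp_vstar hγ0 hγ1 hP) s)

end PolicyEvaluation

section DiscountedFlow

variable {S A : Type} [Fintype A] {d m : ℕ} {γ : ℝ} {P : S → A → S → ℝ}
  {r : S → A → ℝ} {Φ : S → Fin d → ℝ} {c : Fin m → S} {s₀ : S}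
  {lam : Option (Fin m) × A → ℝ} {v e : S → ℝ} {ε : ℝ}

theorem epsApprox_nonneg (Φ : S → Fin d → ℝ) (v : S → ℝ) : 0 ≤ epsApprox Φ v :=
  Real.iInf_nonneg fun _ => Real.iSup_nonneg fun _ => abs_nonneg _

/-- The block of `λ` at the planning state `s₀`. -/
def initialWeights (lam : Option (Fin m) × A → ℝ) (a : A) : ℝ :=
  lam (none, a)

/-- The block of `λ` at the core states. -/
def coreWeights (lam : Option (Fin m) × A → ℝ) (p : Fin m × A) : ℝ :=
  lam (some p.1, p.2)

theorem coreLPObj_eq_add :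
    CoreLPObj r s₀ c lam = initialWeights lam ⬝ᵥ r s₀ +
      coreWeights lam ⬝ᵥ fun p => r (c p.1) p.2 := by
  simp only [CoreLPObj, Fintype.sum_prod_type, Fintype.sum_option, dotProduct, initialWeights,
    coreWeights, splus, Option.elim_none, Option.elim_some]

variable [Fintype S]

/-- The linear functional `v ↦ λᵀW(E − γP)v`. Feasibility of `λ` for CoreLP says that it agrees
with evaluation at `s₀` on the span of the features. -/
noncomputable def discountedFlow (γ : ℝ) (P : S → A → S → ℝ) (s₀ : S) (c : Fin m → S)
    (lam : Option (Fin m) × A → ℝ) : (S → ℝ) →ₗ[ℝ] ℝ where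
  toFun v := CoreLPObj (fun s a => v s - γ * (P s a ⬝ᵥ v)) s₀ c lam
  map_add' v w := by
    simp only [CoreLPObj, Pi.add_apply, dotProduct_add, ← Finset.sum_add_distrib]
    exact Finset.sum_congr rfl fun p _ => by ring
  map_smul' k v := by
    simp only [CoreLPObj, Pi.smul_apply, dotProduct_smul, smul_eq_mul, RingHom.id_apply,
      Finset.mul_sum]
    exact Finset.sum_congr rfl fun p _ => by ring

theorem discountedFlow_apply (v : S → ℝ) :
    discountedFlow γ P s₀ c lam v = CoreLPObj (fun s a => v s - γ * (P s a ⬝ᵥ v)) s₀ c lam :=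
  rfl

theorem coreLPConstraint_iff :
    CoreLPConstraint γ P Φ s₀ c lam ↔
      ∀ j, discountedFlow γ P s₀ c lam (fun s => Φ s j) = Φ s₀ j := by
  refine forall_congr' fun j => ?_
  have hneg : ∑ p : Option (Fin m) × A, lam p * (γ * (∑ s', P (splus s₀ c p.1) p.2 s' * Φ s' j) -
      Φ (splus s₀ c p.1) j) = -discountedFlow γ P s₀ c lam (fun s => Φ s j) := by
    simp only [discountedFlow_apply, CoreLPObj, dotProduct, ← Finset.sum_neg_distrib, ← mul_neg,
      neg_sub]
  rw [hneg, ← sub_eq_add_neg, sub_eq_zero, eq_comm]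

theorem CoreLPConstraint.discountedFlow_phiDot (h : CoreLPConstraint γ P Φ s₀ c lam)
    (θ : Fin d → ℝ) : discountedFlow γ P s₀ c lam (phiDot Φ θ) = phiDot Φ θ s₀ := by
  have hspan : phiDot Φ θ = ∑ j, θ j • fun s => Φ s j := by
    ext s
    simp only [phiDot, Finset.sum_apply, Pi.smul_apply, smul_eq_mul, mul_comm]
  rw [hspan, map_sum, Finset.sum_apply]
  exact Finset.sum_congr rfl fun j _ => by
    rw [map_smul, coreLPConstraint_iff.1 h j, Pi.smul_apply]

theorem discountedFlow_apply_of_inLambda (hl : InLambda lam) (v : S → ℝ) :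
    discountedFlow γ P s₀ c lam v =
      v s₀ - γ * (initialWeights lam ⬝ᵥ fun a => P s₀ a ⬝ᵥ v) +
        coreWeights lam ⬝ᵥ fun p => v (c p.1) - γ * (P (c p.1) p.2 ⬝ᵥ v) := by
  have hinit : (initialWeights lam ⬝ᵥ fun a => v s₀ - γ * (P s₀ a ⬝ᵥ v)) =
      v s₀ - γ * (initialWeights lam ⬝ᵥ fun a => P s₀ a ⬝ᵥ v) := by
    simp only [dotProduct, mul_sub, Finset.sum_sub_distrib, ← Finset.sum_mul, Finset.mul_sum,
      mul_left_comm γ]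
    rw [show ∑ a, initialWeights lam a = 1 from hl.2, one_mul]
  rw [discountedFlow_apply, coreLPObj_eq_add, hinit]

theorem sum_coreWeights_eq (hγ1 : γ < 1) (hP : ∀ s a, P s a ∈ stdSimplex ℝ S)
    (hl : InLambda lam) (hone : discountedFlow γ P s₀ c lam 1 = 1) :
    ∑ p, coreWeights lam p = γ / (1 - γ) := by
  have hP1 : ∀ s a, P s a ⬝ᵥ 1 = 1 := fun s a => by rw [dotProduct_one, (hP s a).2]
  have hinit : initialWeights lam ⬝ᵥ (fun _ => (1 : ℝ)) = 1 := (dotProduct_one _).trans hl.2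
  rw [discountedFlow_apply_of_inLambda hl] at hone
  simp only [hP1, hinit, Pi.one_apply, mul_one] at hone
  simp only [dotProduct, ← Finset.sum_mul] at hone
  rw [eq_div_iff (sub_pos.2 hγ1).ne']
  linarith

theorem abs_discountedFlow_sub_le (hγ0 : 0 ≤ γ) (hγ1 : γ < 1)
    (hP : ∀ s a, P s a ∈ stdSimplex ℝ S) (hl : InLambda lam)
    (hone : discountedFlow γ P s₀ c lam 1 = 1) (he : ∀ s, |e s| ≤ ε) :
    |discountedFlow γ P s₀ c lam e - e s₀| ≤ 2 * γ * ε / (1 - γ) := by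
  have hPe : ∀ s a, |P s a ⬝ᵥ e| ≤ ε := fun s a => abs_dotProduct_le_of_mem_stdSimplex (hP s a) he
  have hinit : |initialWeights lam ⬝ᵥ fun a => P s₀ a ⬝ᵥ e| ≤ ε :=
    abs_dotProduct_le_of_mem_stdSimplex ⟨fun a => hl.1 (none, a), hl.2⟩ (hPe s₀)
  have hterm : ∀ p : Fin m × A, |e (c p.1) - γ * (P (c p.1) p.2 ⬝ᵥ e)| ≤ ε + γ * ε := fun p =>
    (abs_sub _ _).trans <| add_le_add (he _) <| by
      rw [abs_mul, abs_of_nonneg hγ0]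
      exact mul_le_mul_of_nonneg_left (hPe _ _) hγ0
  have hcore : |coreWeights lam ⬝ᵥ fun p => e (c p.1) - γ * (P (c p.1) p.2 ⬝ᵥ e)| ≤
      γ / (1 - γ) * (ε + γ * ε) := by
    rw [← sum_coreWeights_eq hγ1 hP hl hone]
    exact abs_dotProduct_le_sum_mul (fun p => hl.1 _) hterm
  rw [discountedFlow_apply_of_inLambda hl]
  calc _ = |(coreWeights lam ⬝ᵥ fun p => e (c p.1) - γ * (P (c p.1) p.2 ⬝ᵥ e)) -
        γ * (initialWeights lam ⬝ᵥ fun a => P s₀ a ⬝ᵥ e)| := by congr 1; ring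
    _ ≤ γ / (1 - γ) * (ε + γ * ε) + γ * ε := by
        refine (abs_sub _ _).trans (add_le_add hcore ?_)
        rw [abs_mul, abs_of_nonneg hγ0]
        exact mul_le_mul_of_nonneg_left hinit hγ0
    _ = 2 * γ * ε / (1 - γ) := by
        have := (sub_pos.2 hγ1).ne'
        field_simp
        ring

theorem CoreLPConstraint.abs_discountedFlow_sub_le_epsApprox (hγ0 : 0 ≤ γ) (hγ1 : γ < 1)
    (hP : ∀ s a, P s a ∈ stdSimplex ℝ S) {η : Fin d → ℝ} (hη : ∀ s, phiDot Φ η s = 1)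
    (hl : InLambda lam) (h : CoreLPConstraint γ P Φ s₀ c lam) (v : S → ℝ) :
    |discountedFlow γ P s₀ c lam v - v s₀| ≤ 2 * γ * epsApprox Φ v / (1 - γ) := by
  have hone : discountedFlow γ P s₀ c lam 1 = 1 := by
    simpa only [funext hη, ← Pi.one_def] using h.discountedFlow_phiDot η
  have hγ2 : 0 ≤ 2 * γ / (1 - γ) := div_nonneg (by positivity) (sub_nonneg.2 hγ1.le)
  rw [mul_div_right_comm, epsApprox, Real.mul_iInf_of_nonneg hγ2]
  refine le_ciInf fun θ => ?_
  have herr : discountedFlow γ P s₀ c lam v - v s₀ =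
      discountedFlow γ P s₀ c lam (v - phiDot Φ θ) - (v - phiDot Φ θ) s₀ := by
    rw [map_sub, h.discountedFlow_phiDot, Pi.sub_apply, sub_sub_sub_cancel_right]
  rw [herr]
  rw [← mul_div_right_comm]
  exact abs_discountedFlow_sub_le hγ0 hγ1 hP hl hone fun s =>
    le_ciSup (f := fun s => |v s - phiDot Φ θ s|) (Set.finite_range _).bddAbove s

theorem coreLPObj_le_discountedFlow (hlam : 0 ≤ lam) (hv : ∀ s a, lookahead γ P r v s a ≤ v s) :
    CoreLPObj r s₀ c lam ≤ discountedFlow γ P s₀ c lam v :=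
  Finset.sum_le_sum fun p _ =>
    mul_le_mul_of_nonneg_left (le_sub_iff_add_le.2 (hv (splus s₀ c p.1) p.2)) (hlam p)

end DiscountedFlow

section PolicyWeights

variable {S A : Type} [Fintype A] [DecidableEq A] {m : ℕ} {γ : ℝ} {P : S → A → S → ℝ}
  {r : S → A → ℝ} {c : Fin m → S} {s₀ : S} {g : S → A} {x : Fin m → ℝ} {v : S → ℝ}

/-- The element of `Λ` that plays the deterministic policy `g`, with mass `1` at `s₀` and mass `x i`
at the `i`-th core state. -/
def policyWeights (s₀ : S) (c : Fin m → S) (g : S → A) (x : Fin m → ℝ)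
    (p : Option (Fin m) × A) : ℝ :=
  p.1.elim 1 x * (Pi.single (g (splus s₀ c p.1)) 1 : A → ℝ) p.2

theorem inLambda_policyWeights (hx : 0 ≤ x) : InLambda (policyWeights s₀ c g x) := by
  refine ⟨fun p => mul_nonneg ?_ ((single_mem_stdSimplex ℝ _).1 p.2), ?_⟩
  · rcases p with ⟨_ | i, a⟩
    exacts [zero_le_one, hx i]
  · simp only [policyWeights, Option.elim_none, one_mul]
    exact (single_mem_stdSimplex ℝ _).2

theorem coreLPObj_policyWeights :
    CoreLPObj r s₀ c (policyWeights s₀ c g x) = r s₀ (g s₀) + x ⬝ᵥ fun i => r (c i) (g (c i)) := by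
  simp only [CoreLPObj, policyWeights, Fintype.sum_prod_type, Fintype.sum_option, mul_assoc,
    ← Finset.mul_sum, Option.elim_none, Option.elim_some, splus, one_mul, dotProduct]
  simp [Pi.single_apply]

variable [Fintype S]

theorem coreLPObj_policyWeights_eq_discountedFlow (hv : ∀ s, lookahead γ P r v s (g s) = v s) :
    CoreLPObj r s₀ c (policyWeights s₀ c g x) =
      discountedFlow γ P s₀ c (policyWeights s₀ c g x) v := by
  have hr : ∀ s, r s (g s) = v s - γ * (P s (g s) ⬝ᵥ v) := fun s => eq_sub_of_add_eq (hv s)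
  simp only [discountedFlow_apply, coreLPObj_policyWeights, hr]

/-- The transition matrix obtained by following `g` for one step and then spreading the mass of the
successor state over the core states according to `Z`. -/
def coreTransition (P : S → A → S → ℝ) (g : S → A) (Z : Matrix S (Fin m) ℝ) :
    Matrix S (Fin m) ℝ :=
  of fun s => P s (g s) ᵥ* Z

theorem discountedFlow_policyWeights {Z : Matrix S (Fin m) ℝ}
    (hx : x = γ • coreTransition P g Z s₀ + γ • (x ᵥ* (coreTransition P g Z).submatrix c id))
    (hv : ∀ s, v s = Z s ⬝ᵥ (v ∘ c)) :
    discountedFlow γ P s₀ c (policyWeights s₀ c g x) v = v s₀ := by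
  have hPv : ∀ s, P s (g s) ⬝ᵥ v = coreTransition P g Z s ⬝ᵥ (v ∘ c) := fun s => by
    have hvZ : v = Z *ᵥ (v ∘ c) := funext hv
    conv_lhs => rw [hvZ]
    exact dotProduct_mulVec _ _ _
  have hflow : discountedFlow γ P s₀ c (policyWeights s₀ c g x) v =
      v s₀ - γ * (P s₀ (g s₀) ⬝ᵥ v) + x ⬝ᵥ fun i => v (c i) - γ * (P (c i) (g (c i)) ⬝ᵥ v) := by
    rw [discountedFlow_apply, coreLPObj_policyWeights]
  have hcore : (x ⬝ᵥ fun i => v (c i) - γ * (P (c i) (g (c i)) ⬝ᵥ v)) =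
      x ⬝ᵥ (v ∘ c) - γ * ((x ᵥ* (coreTransition P g Z).submatrix c id) ⬝ᵥ (v ∘ c)) := by
    simp only [hPv]
    rw [← dotProduct_mulVec, ← smul_eq_mul, ← dotProduct_smul, ← dotProduct_sub]
    rfl
  have hxv := congrArg (· ⬝ᵥ (v ∘ c)) hx
  simp only [add_dotProduct, smul_dotProduct, smul_eq_mul] at hxv
  rw [hflow, hcore, hPv]
  linarith

end PolicyWeights

section Feasibility

variable {S A : Type} {d m : ℕ} {γ : ℝ} {P : S → A → S → ℝ}
  {Φ : S → Fin d → ℝ} {c : Fin m → S} {Z : Matrix S (Fin m) ℝ}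

/-- Because the features reproduce the constant `1`, a conic combination of core features is
automatically convex. -/
theorem mem_stdSimplex_of_phiDot_eq_one {η : Fin d → ℝ} (hη : ∀ s, phiDot Φ η s = 1)
    (hZ : ∀ s i, 0 ≤ Z s i) (hΦ : ∀ s j, Φ s j = ∑ i, Z s i * Φ (c i) j) (s : S) :
    Z s ∈ stdSimplex ℝ (Fin m) := by
  refine ⟨hZ s, ?_⟩
  have hΦs : Φ s = Z s ᵥ* of fun i => Φ (c i) := funext (hΦ s)
  calc ∑ i, Z s i = Z s ⬝ᵥ fun i => phiDot Φ η (c i) := by simp only [hη, dotProduct, mul_one]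
    _ = Φ s ⬝ᵥ η := by rw [hΦs, ← dotProduct_mulVec]; rfl
    _ = 1 := hη s

theorem exists_coreLPConstraint_policyWeights [Fintype S] [Fintype A] [DecidableEq A]
    (hγ0 : 0 ≤ γ) (hγ1 : γ < 1) (hP : ∀ s a, P s a ∈ stdSimplex ℝ S)
    (hZ : ∀ s, Z s ∈ stdSimplex ℝ (Fin m)) (hΦ : ∀ s j, Φ s j = ∑ i, Z s i * Φ (c i) j)
    (s₀ : S) (g : S → A) :
    ∃ x, 0 ≤ x ∧ CoreLPConstraint γ P Φ s₀ c (policyWeights s₀ c g x) := by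
  have hT : ∀ s, coreTransition P g Z s ∈ stdSimplex ℝ (Fin m) := fun s =>
    vecMul_mem_stdSimplex (hP s (g s)) hZ
  have hQ := mem_rowStochastic_of_forall_mem_stdSimplex
    (Q := (coreTransition P g Z).submatrix c id) fun i => hT (c i)
  obtain ⟨x, hx0, hx⟩ := exists_nonneg_eq_add_smul_vecMul hγ0 hγ1 hQ
    (b := γ • coreTransition P g Z s₀) fun i => mul_nonneg hγ0 ((hT s₀).1 i)
  exact ⟨x, hx0, coreLPConstraint_iff.2 fun j => discountedFlow_policyWeights hx fun s => hΦ s j⟩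

end Feasibility

theorem corelp_value_close_general {S A : Type} [Fintype S] [Fintype A] [DecidableEq S]
    [Nonempty A] {d m : ℕ} {γ : ℝ} (hγ0 : 0 ≤ γ) (hγ1 : γ < 1)
    {P : S → A → S → ℝ} (hP : ∀ s a, P s a ∈ stdSimplex ℝ S) (r : S → A → ℝ)
    {Φ : S → Fin d → ℝ} (hfeat : ∃ η : Fin d → ℝ, ∀ s, phiDot Φ η s = 1) {c : Fin m → S}
    (hcore : ∃ Z : S → Fin m → ℝ, (∀ s i, 0 ≤ Z s i) ∧ ∀ s j, Φ s j = ∑ i, Z s i * Φ (c i) j)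
    (s₀ : S) :
    |Vdagger γ P r Φ s₀ c - vstar γ P r s₀| ≤
      2 * γ * epsApprox Φ (vstar γ P r) / (1 - γ) := by
  classical
  obtain ⟨⟨η, hη⟩, Z, hZ, hΦ⟩ := hfeat, hcore
  choose g hg using exists_qstar_eq_vstar (r := r) hγ0 hγ1 hP
  obtain ⟨x, hx, hfeas⟩ := exists_coreLPConstraint_policyWeights hγ0 hγ1 hP
    (mem_stdSimplex_of_phiDot_eq_one hη hZ hΦ) hΦ s₀ g
  have hflow {lam : Option (Fin m) × A → ℝ} (hl : InLambda lam)
      (h : CoreLPConstraint γ P Φ s₀ c lam) := abs_sub_le_iff.1 <|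
    h.abs_discountedFlow_sub_le_epsApprox hγ0 hγ1 hP hη hl (vstar γ P r)
  have hupper : ∀ y ∈ {y : ℝ | ∃ lam : Option (Fin m) × A → ℝ, InLambda lam ∧
      CoreLPConstraint γ P Φ s₀ c lam ∧ y = CoreLPObj r s₀ c lam},
      y ≤ vstar γ P r s₀ + 2 * γ * epsApprox Φ (vstar γ P r) / (1 - γ) := by
    rintro _ ⟨lam, hl, h, rfl⟩
    linarith [coreLPObj_le_discountedFlow (r := r) (s₀ := s₀) (c := c) hl.1
      (qstar_le_vstar (r := r) hγ0 hγ1 hP), (hflow hl h).1]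
  have hl := inLambda_policyWeights (s₀ := s₀) (c := c) (g := g) hx
  have hlower : discountedFlow γ P s₀ c (policyWeights s₀ c g x) (vstar γ P r) ≤
      Vdagger γ P r Φ s₀ c :=
    le_csSup ⟨_, hupper⟩ ⟨_, hl, hfeas, (coreLPObj_policyWeights_eq_discountedFlow hg).symm⟩
  refine abs_sub_le_iff.2 ⟨sub_le_iff_le_add'.2 (csSup_le ⟨_, _, hl, hfeas, rfl⟩ hupper), ?_⟩
  linarith [(hflow hl hfeas).2]

/-- `|V† − v*(s₀)| ≤ 10γ·ε_approx/(1−γ)` for CoreLP. -/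
theorem corelp_value_close
    {S A : Type} [Fintype S] [Fintype A] [DecidableEq S] [Nonempty S] [Nonempty A]
    {d m : ℕ} (γ : ℝ) (hγ0 : 0 ≤ γ) (hγ1 : γ < 1)
    (P : S → A → S → ℝ) (hP0 : ∀ s a s', 0 ≤ P s a s')
    (hP1 : ∀ s a, ∑ s', P s a s' = 1)
    (r : S → A → ℝ)
    (Φ : S → Fin d → ℝ) (hfeat : ∃ η : Fin d → ℝ, ∀ s, phiDot Φ η s = 1)
    (c : Fin m → S) (hc : Function.Injective c)
    (hcore : ∃ Z : S → Fin m → ℝ, (∀ s i, 0 ≤ Z s i) ∧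
      ∀ s j, Φ s j = ∑ i, Z s i * Φ (c i) j)
    (s₀ : S) :
    |Vdagger γ P r Φ s₀ c - vstar γ P r s₀| ≤
      10 * γ * epsApprox Φ (vstar γ P r) / (1 - γ) := by
  have := epsApprox_nonneg Φ (vstar γ P r)
  have := sub_nonneg.2 hγ1.le
  refine (corelp_value_close_general hγ0 hγ1 (fun s a => ⟨hP0 s a, hP1 s a⟩) r hfeat hcore
    s₀).trans ?_
  gcongr
  norm_num

end MDPPlan
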